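/- Let 𝒩 be a network architecture whose buffer structure satisfies the buffer axioms B1–B8. Then for every 𝒩-channel-compliant finite word w, for all participants p ≠ q and every value v, the number of occurrences of the event p▷q!v in w is greater than or equal to the number of occurrences of the event p▷q?v in w (channel compliance fact CC2). -/

import Mathlib

/-!
Only the channel `c = N.chan p q` matters: executing a word acts on the buffer of `c` by the
sequence of buffer operations induced by the events on `c` (`chanOps`), and the sends and receives
of `(p, q, v)` all occur on that channel. It therefore suffices to show that a sequence `σ` of
buffer operations defined on the empty buffer removes each message at most as often as it inserts it
(`count_rem_le_count_ins`).

This is by induction on the length of `σ`. By (B3) a nonempty `σ` starts with an insertion,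
`σ = ins m₀ :: τ`. If `rem m₀` does not occur in `τ`, then (B5) shows that `τ` is defined on the
empty buffer. Otherwise write `τ = τ₁ ++ rem m₀ :: τ₂` around the first such removal; by (B8) the
matching pair `ins m₀`, `rem m₀` can be deleted, so `τ₁ ++ τ₂` is defined on the empty buffer. In
both cases the bound for the shorter sequence gives the one for `σ`.
-/

/-- Operations on a buffer: insert or remove a message. -/
inductive BOp (M : Type) where
  | ins (m : M)
  | rem (m : M)

/-- Apply a single buffer operation. -/
def applyOp {M B : Type} (ins rem : M → B → Option B) : BOp M → B → Option B
  | .ins m, b => ins m b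
  | .rem m, b => rem m b

/-- Apply a finite sequence of buffer operations, left to right. -/
def applySeq {M B : Type} (ins rem : M → B → Option B) : List (BOp M) → B → Option B
  | [], b => some b
  | op :: σ, b => (applyOp ins rem op b).bind (applySeq ins rem σ)

/-- The eight buffer axioms B1–B8 for a buffer structure with contents `B`,
partial operations `ins`, `rem` and empty buffer `b0`. -/
structure BufferAxioms (M B : Type) (ins rem : M → B → Option B) (b0 : B) : Prop where
  b1 : ∀ (m : M) (b : B), (ins m b).isSome
  b2 : ∀ m : M, ((ins m b0).bind (rem m)).isSome
  b3 : ∀ m : M, rem m b0 = none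
  b4 : ∀ (m m' : M) (b : B), (rem m b).isSome → ((ins m' b).bind (rem m)).isSome
  b5 : ∀ (m : M) (b : B) (σ : List (BOp M)), BOp.rem m ∉ σ →
        ((ins m b).bind (applySeq ins rem σ)).isSome → (applySeq ins rem σ b).isSome
  b6 : ∀ (m : M) (b : B), (rem m b).isSome →
        (ins m b).bind (rem m) = (rem m b).bind (ins m)
  b7 : ∀ (m m' : M) (b : B), m ≠ m' →
        (ins m b).bind (rem m') = (rem m' b).bind (ins m)
  b8 : ∀ (m : M) (b : B) (σ : List (BOp M)), rem m b = none → BOp.rem m ∉ σ →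
        (((ins m b).bind (applySeq ins rem σ)).bind (rem m)).isSome →
        ((ins m b).bind (applySeq ins rem σ)).bind (rem m) = applySeq ins rem σ b

/-- Asynchronous events: send events `p▷q!v` and receive events `p▷q?v`. -/
inductive Event (P V : Type) where
  | send (p q : P) (v : V)
  | recv (p q : P) (v : V)
deriving DecidableEq

/-- The active participant of an event: the sender of a send, the receiver of a receive. -/
def Event.active {P V : Type} : Event P V → P
  | .send p _ _ => p
  | .recv _ q _ => q

/-- A network architecture: channels `C`, buffer contents `B`, a channel map,
partial insert/remove operations, and an empty buffer. -/
structure NetArch (P V C B : Type) where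
  chan : P → P → C
  insert : P × P × V → B → Option B
  remove : P × P × V → B → Option B
  b0 : B

variable {P V C B : Type}

/-- Executing a single event on a channel state. -/
def NetArch.step [DecidableEq C] (N : NetArch P V C B) :
    Event P V → (C → B) → Option (C → B)
  | .send p q v, ξ => (N.insert (p, q, v) (ξ (N.chan p q))).map (Function.update ξ (N.chan p q))
  | .recv p q v, ξ => (N.remove (p, q, v) (ξ (N.chan p q))).map (Function.update ξ (N.chan p q))

/-- Executing a finite word of events from a channel state. -/
def NetArch.runFrom [DecidableEq C] (N : NetArch P V C B) :
    List (Event P V) → (C → B) → Option (C → B)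
  | [], ξ => some ξ
  | e :: w, ξ => (N.step e ξ).bind (N.runFrom w)

/-- The initial channel state: every channel holds the empty buffer. -/
def NetArch.init (N : NetArch P V C B) : C → B := fun _ => N.b0

/-- A finite word is channel-compliant if executing it from the initial channel
state is defined at every step. -/
def NetArch.compliant [DecidableEq C] (N : NetArch P V C B) (w : List (Event P V)) : Prop :=
  (N.runFrom w N.init).isSome

/-- A finite word is channel-matched if it is channel-compliant and reaches the
initial (all-empty) channel state. -/
def NetArch.matched [DecidableEq C] (N : NetArch P V C B) (w : List (Event P V)) : Prop :=
  N.runFrom w N.init = some N.init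

/-- Projection of a word onto the events in which participant `r` is active. -/
def proj [DecidableEq P] (r : P) (w : List (Event P V)) : List (Event P V) :=
  w.filter (fun e => decide (e.active = r))

/-- Equality under local projection. -/
def equivP [DecidableEq P] (w₁ w₂ : List (Event P V)) : Prop :=
  ∀ r : P, proj r w₁ = proj r w₂

/-- `split` replaces every synchronous message exchange `(p,q,v)` by the two
consecutive asynchronous events `p▷q!v · p▷q?v`. -/
def split : List (P × P × V) → List (Event P V)
  | [] => []
  | m :: ρ => Event.send m.1 m.2.1 m.2.2 :: Event.recv m.1 m.2.1 m.2.2 :: split ρ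

theorem applySeq_append {M B : Type} (ins rem : M → B → Option B) (σ τ : List (BOp M)) (b : B) :
    applySeq ins rem (σ ++ τ) b = (applySeq ins rem σ b).bind (applySeq ins rem τ) := by
  induction σ generalizing b with
  | nil => rfl
  | cons op σ ih =>
    simp only [List.cons_append, applySeq, Option.bind_assoc]
    congr 1
    funext b'
    exact ih b'

/-- A list containing `a` splits around the first occurrence of `a`. -/
theorem exists_first_split {α : Type} (a : α) (l : List α) (h : a ∈ l) :
    ∃ s t, l = s ++ a :: t ∧ a ∉ s := by
  classical
  obtain ⟨s, t, h₁, h₂, -⟩ := List.exists_erase_eq h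
  exact ⟨s, t, h₂, h₁⟩

/-- A sequence of operations that is defined on the empty buffer removes each message at most as
often as it inserts it. -/
theorem count_rem_le_count_ins {M B : Type} [DecidableEq (BOp M)] {ins rem : M → B → Option B}
    {b0 : B} (h : BufferAxioms M B ins rem b0) (m : M) (n : ℕ) (σ : List (BOp M))
    (hn : σ.length ≤ n) (hσ : (applySeq ins rem σ b0).isSome) :
    σ.count (.rem m) ≤ σ.count (.ins m) := by
  induction n generalizing σ with
  | zero =>
    obtain rfl : σ = [] := List.length_eq_zero_iff.1 (Nat.le_zero.1 hn)
    simp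
  | succ n ih =>
    rcases σ with _ | ⟨m₀ | m₀, τ⟩
    · simp
    · have hlen : τ.length ≤ n := by simpa using hn
      by_cases hmem : BOp.rem m₀ ∈ τ
      · obtain ⟨τ₁, τ₂, rfl, hτ₁⟩ := exists_first_split _ _ hmem
        have heq : applySeq ins rem (.ins m₀ :: (τ₁ ++ .rem m₀ :: τ₂)) b0
            = (((ins m₀ b0).bind (applySeq ins rem τ₁)).bind (rem m₀)).bind
                (applySeq ins rem τ₂) := by
          simp only [applySeq, applyOp, Option.bind_assoc]
          congr 1
          funext b
          exact applySeq_append ..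
        rw [heq] at hσ
        have hdef : (((ins m₀ b0).bind (applySeq ins rem τ₁)).bind (rem m₀)).isSome :=
          Option.isSome_of_isSome_bind hσ
        rw [h.b8 m₀ b0 τ₁ (h.b3 m₀) hτ₁ hdef, ← applySeq_append] at hσ
        have key := ih (τ₁ ++ τ₂) (by simp at hlen ⊢; omega) hσ
        by_cases hm : m₀ = m
        · subst hm
          simp [List.count_append] at key ⊢
          omega
        · simp [List.count_append, hm] at key ⊢
          omega
      · have key := ih τ hlen (h.b5 m₀ b0 τ hmem hσ)
        simp only [List.count_cons, beq_iff_eq, reduceCtorEq, if_false]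
        omega
    · simp [applySeq, applyOp, h.b3] at hσ

/-- The sequence of buffer operations that a word of events performs on the channel `c`. -/
def chanOps [DecidableEq C] (N : NetArch P V C B) (c : C) :
    List (Event P V) → List (BOp (P × P × V))
  | [] => []
  | .send p q v :: w => if N.chan p q = c then .ins (p, q, v) :: chanOps N c w else chanOps N c w
  | .recv p q v :: w => if N.chan p q = c then .rem (p, q, v) :: chanOps N c w else chanOps N c w

theorem applySeq_chanOps_isSome [DecidableEq C] (N : NetArch P V C B) (c : C)
    (w : List (Event P V)) (ξ : C → B) (h : (N.runFrom w ξ).isSome) :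
    (applySeq N.insert N.remove (chanOps N c w) (ξ c)).isSome := by
  induction w generalizing ξ with
  | nil => rfl
  | cons e w ih =>
    obtain ⟨ξ', hξ'⟩ := Option.isSome_iff_exists.1 (Option.isSome_of_isSome_bind h)
    have hrec := ih ξ' (by simpa [NetArch.runFrom, hξ'] using h)
    cases e with
    | send p q v | recv p q v =>
      obtain ⟨b, hb, rfl⟩ := Option.map_eq_some_iff.1 hξ'
      by_cases hc : N.chan p q = c
      · subst hc
        simpa [chanOps, applySeq, applyOp, hb] using hrec
      · simpa [chanOps, hc, Function.update_of_ne (Ne.symm hc)] using hrec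

theorem count_chanOps [DecidableEq P] [DecidableEq V] [DecidableEq C]
    [DecidableEq (BOp (P × P × V))] (N : NetArch P V C B) (p q : P) (v : V)
    (w : List (Event P V)) :
    (chanOps N (N.chan p q) w).count (.ins (p, q, v)) = w.count (.send p q v) ∧
      (chanOps N (N.chan p q) w).count (.rem (p, q, v)) = w.count (.recv p q v) := by
  induction w with
  | nil => simp [chanOps]
  | cons e w ih =>
    cases e with
    | send p' q' v' | recv p' q' v' =>
      by_cases hc : N.chan p' q' = N.chan p q
      · simp [chanOps, hc, List.count_cons, ih]
      · have hne : ¬ (p' = p ∧ q' = q ∧ v' = v) := by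
          rintro ⟨rfl, rfl, -⟩
          exact hc rfl
        simp [chanOps, hc, ih, hne]

/-- CC2: in a channel-compliant word over a network architecture satisfying the
buffer axioms B1–B8, each message is sent at least as often as it is received. -/
theorem cc2_send_before_receive {P V C B : Type}
    [DecidableEq P] [DecidableEq V] [DecidableEq C] (N : NetArch P V C B)
    (hN : BufferAxioms (P × P × V) B N.insert N.remove N.b0)
    (w : List (Event P V)) (hw : N.compliant w)
    (p q : P) (hpq : p ≠ q) (v : V) :
    w.count (Event.recv p q v) ≤ w.count (Event.send p q v) := by
  classical
  obtain ⟨hsend, hrecv⟩ := count_chanOps N p q v w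
  rw [← hsend, ← hrecv]
  exact count_rem_le_count_ins hN (p, q, v) _ _ le_rfl
    (applySeq_chanOps_isSome N (N.chan p q) w N.init hw)
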